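/- Let G be the graph on {a,b,p,q,x,z} with edges ab, ax, bx, ap, bq, pz, xz, qz (a pentagon a-p-z-q-b-a together with a vertex x adjacent to a, b, z). Then for every s ≥ 2, I(G)^s has linear quotients. -/

import Mathlib

open MvPolynomial

/-- An ideal is generated by a subset of the variables. -/
def genByVars {K : Type*} [Field K] {σ : Type*} (J : Ideal (MvPolynomial σ K)) : Prop :=
  ∃ S : Set σ, J = Ideal.span ((fun i => (X i : MvPolynomial σ K)) '' S)

/-- An equigenerated monomial ideal has linear quotients: there is an ordering of a
minimal monomial generating system (an antichain of exponent vectors) such that each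
successive colon ideal is generated by variables. -/
def HasLinearQuotients {K : Type*} [Field K] {σ : Type*} (I : Ideal (MvPolynomial σ K)) : Prop :=
  ∃ (r : ℕ) (d : Fin r → (σ →₀ ℕ)),
    (∀ i j : Fin r, i ≠ j → ¬ d i ≤ d j) ∧
    Ideal.span (Set.range fun i => (monomial (d i) (1 : K))) = I ∧
    ∀ i : Fin r,
      genByVars (Submodule.colon
        (Ideal.span ((fun j => (monomial (d j) (1 : K))) '' {j | j < i}))
        (Ideal.span {(monomial (d i) (1 : K))}))

/-- A graph is gapfree if any two disjoint edges are joined by an edge meeting both. -/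
def Gapfree {V : Type*} (G : SimpleGraph V) : Prop :=
  ∀ a b c d : V, G.Adj a b → G.Adj c d → ({a, b} : Set V) ∩ {c, d} = ∅ →
    ∃ u v : V, G.Adj u v ∧ (({u, v} : Set V) ∩ {a, b}).Nonempty ∧
      (({u, v} : Set V) ∩ {c, d}).Nonempty

/-- The edge ideal of a graph. -/
noncomputable def edgeIdeal (K : Type*) [Field K] {V : Type*} (G : SimpleGraph V) :
    Ideal (MvPolynomial V K) :=
  Ideal.span {m | ∃ a b : V, G.Adj a b ∧ m = X a * X b}

/-- The graph on `{a,b,p,q,x,z}` (`a=0, b=1, p=2, q=3, x=4, z=5`) with edges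
`ab, ax, bx, ap, bq, pz, xz, qz`. -/
def pentagonPlus : SimpleGraph (Fin 6) :=
  SimpleGraph.fromRel (fun i j =>
    (i = 0 ∧ j = 1) ∨ (i = 0 ∧ j = 4) ∨ (i = 1 ∧ j = 4) ∨ (i = 0 ∧ j = 2) ∨
    (i = 1 ∧ j = 3) ∨ (i = 2 ∧ j = 5) ∨ (i = 4 ∧ j = 5) ∨ (i = 3 ∧ j = 5))

/-!
The generators of `I(G) ^ s` are exactly the monomials of degree `2 * s` whose weight on each
maximal independent set of `G` is at most `s`: no edge has both ends in an independent set, and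
conversely any such monomial is divisible by an edge that meets every maximal independent set of
weight `s`, so that the quotient satisfies the same bounds for `s - 1`.

A colon ideal by the earlier generators is generated by variables as soon as, for every
`u` before `v`, some variable `x_i` with `v i < u i` brings `v` back to an earlier generator `w`,
in the sense that `w` divides `x_i v`. We take `w = x_i v / x_j`, and sort the generators by their
exponent of `a`, then lexicographically, except that the generator `(ap)^k (bq)^l`, of which there
is at most one for each exponent of `a`, goes last among those with the same exponent. This
exception makes the exchange of `p` for `b`, which increases in the lexicographic order, available
at `(ap)^k (bq)^l`. If no exchange applied, the bounds that are tight at `v`, together with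
`u i ≤ v i` in the remaining directions, would contradict that `u ≠ v` have the same degree.
-/

open Finsupp
open scoped Pointwise

section MonomialIdeals

variable {σ K : Type*} [Field K]

theorem isAntichain_of_degree_eq {M : Set (σ →₀ ℕ)} {n : ℕ} (hM : ∀ m ∈ M, m.degree = n) :
    IsAntichain (· ≤ ·) M := by
  intro u hu v hv hne hle
  obtain ⟨c, rfl⟩ := le_iff_exists_add.mp hle
  have hdeg : u.degree + c.degree = u.degree := by rw [← map_add, hM _ hv, hM u hu]
  exact hne (by rw [(degree_eq_zero_iff c).mp (by omega), add_zero])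

theorem exists_range_eq_and_strictMono_comp {α β : Type*} [LinearOrder β] {M : Set α}
    (hfin : M.Finite) {key : α → β} (hkey : M.InjOn key) :
    ∃ (r : ℕ) (d : Fin r → α), Set.range d = M ∧ StrictMono (key ∘ d) := by
  classical
  let T := hfin.toFinset.image key
  let e := T.orderEmbOfFin rfl
  have hT : ∀ t, t ∈ T ↔ ∃ m ∈ M, key m = t := by simp [T]
  choose d hdM hde using fun i => (hT (e i)).mp (T.orderEmbOfFin_mem rfl i)
  refine ⟨T.card, d, ?_, fun i j hij => ?_⟩
  · refine Set.Subset.antisymm (Set.range_subset_iff.mpr hdM) fun m hm => ?_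
    obtain ⟨i, hi⟩ : key m ∈ Set.range e := by
      rw [T.range_orderEmbOfFin]
      exact (hT _).mpr ⟨m, hm, rfl⟩
    exact ⟨i, hkey (hdM i) hm ((hde i).trans hi)⟩
  · simpa only [Function.comp_apply, hde] using e.strictMono hij

theorem genByVars_colon_span_monomial {A : Set (σ →₀ ℕ)} {v : σ →₀ ℕ}
    (hA : ∀ u ∈ A, ∃ i, v i < u i ∧ ∃ w ∈ A, w ≤ v + single i 1) :
    genByVars (Submodule.colon (Ideal.span ((fun m => monomial m (1 : K)) '' A))
      (Ideal.span {monomial v (1 : K)})) := by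
  refine ⟨{i | ∃ w ∈ A, w ≤ v + single i 1}, le_antisymm (fun f hf => ?_) ?_⟩
  · rw [Ideal.mem_colon_span_singleton, mem_ideal_span_monomial_image] at hf
    refine mem_ideal_span_X_image.mpr fun m hm => ?_
    obtain ⟨u, hu, hle⟩ := hf (m + v) (by simpa [coeff_mul_monomial] using hm)
    obtain ⟨i, hi, hw⟩ := hA u hu
    have := hle i
    rw [Finsupp.add_apply] at this
    exact ⟨i, hw, by omega⟩
  · rw [Ideal.span_le]
    rintro _ ⟨i, ⟨w, hw, hle⟩, rfl⟩
    rw [SetLike.mem_coe, Ideal.mem_colon_span_singleton, mem_ideal_span_monomial_image]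
    have hmul : (X i : MvPolynomial σ K) * monomial v 1 = monomial (v + single i 1) 1 := by
      rw [X, monomial_mul, one_mul, add_comm]
    intro m hm
    rw [hmul] at hm
    rw [Finset.mem_singleton.mp (support_monomial_subset hm)]
    exact ⟨w, hw, hle⟩

theorem hasLinearQuotients_of_exchange {β : Type*} [LinearOrder β] {M : Set (σ →₀ ℕ)}
    {key : (σ →₀ ℕ) → β} (hfin : M.Finite) (hanti : IsAntichain (· ≤ ·) M) (hkey : M.InjOn key)
    (hexch : ∀ u ∈ M, ∀ v ∈ M, key u < key v →
      ∃ i, v i < u i ∧ ∃ w ∈ M, key w < key v ∧ w ≤ v + single i 1) :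
    HasLinearQuotients (Ideal.span ((fun m => monomial m (1 : K)) '' M)) := by
  obtain ⟨r, d, rfl, hmono⟩ := exists_range_eq_and_strictMono_comp hfin hkey
  refine ⟨r, d, fun i j hij => ?_, by rw [← Set.range_comp]; rfl, fun i => ?_⟩
  · exact hanti ⟨i, rfl⟩ ⟨j, rfl⟩ fun h => hij (hmono.injective (congrArg key h))
  · rw [← Set.image_image (fun m => monomial m (1 : K)) d]
    refine genByVars_colon_span_monomial ?_
    rintro _ ⟨j, hj, rfl⟩
    obtain ⟨k, hk, _, ⟨l, rfl⟩, hl, hle⟩ := hexch _ ⟨j, rfl⟩ _ ⟨i, rfl⟩ (hmono hj)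
    exact ⟨k, hk, d l, ⟨l, hmono.lt_iff_lt.mp hl, rfl⟩, hle⟩

theorem span_monomial_mul_span_monomial {R : Type*} [CommSemiring R] (A B : Set (σ →₀ ℕ)) :
    Ideal.span ((fun m => monomial m (1 : R)) '' A) *
        Ideal.span ((fun m => monomial m (1 : R)) '' B) =
      Ideal.span ((fun m => monomial m (1 : R)) '' (A + B)) := by
  rw [Ideal.span_mul_span']
  exact congrArg _ (Set.image_image2_distrib fun a b => by rw [monomial_mul, one_mul]).symm

theorem span_monomial_pow {R : Type*} [CommSemiring R] (A : Set (σ →₀ ℕ)) (s : ℕ) :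
    Ideal.span ((fun m => monomial m (1 : R)) '' A) ^ s =
      Ideal.span ((fun m => monomial m (1 : R)) '' (s • A)) := by
  induction s with
  | zero => simp
  | succ s ih => rw [pow_succ, ih, span_monomial_mul_span_monomial, succ_nsmul]

end MonomialIdeals

section EdgeVectors

variable {V : Type*} {G : SimpleGraph V} {𝒯 : Set (Finset V)} {s : ℕ} {m v : V →₀ ℕ} {i j : V}

/-- The exponent vectors of the edge monomials `x_i x_j` of `G`; the exponent vectors of the
products of `s` edges form the pointwise multiple `s • edgeVectors G`. -/
def edgeVectors (G : SimpleGraph V) : Set (V →₀ ℕ) :=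
  {m | ∃ i j, G.Adj i j ∧ m = single i 1 + single j 1}

/-- The vectors of degree `2s` of weight at most `s` on every member of `𝒯`. When `𝒯` consists of
independent sets of a graph, these are necessary conditions on a product of `s` edges. -/
def boundedVectors (𝒯 : Set (Finset V)) (s : ℕ) : Set (V →₀ ℕ) :=
  {m | m.degree = 2 * s ∧ ∀ T ∈ 𝒯, ∑ k ∈ T, m k ≤ s}

/-- The vector `v - e_j + e_i`, of use only if `v j ≠ 0`. -/
noncomputable def exchange (v : V →₀ ℕ) (i j : V) : V →₀ ℕ :=
  v - single j 1 + single i 1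

theorem edgeIdeal_pow (K : Type*) [Field K] (G : SimpleGraph V) (s : ℕ) :
    edgeIdeal K G ^ s = Ideal.span ((fun m => monomial m (1 : K)) '' (s • edgeVectors G)) := by
  rw [← span_monomial_pow, edgeIdeal, edgeVectors]
  congr 2
  ext f
  simp only [Set.mem_ofPred_eq, Set.mem_image, X, monomial_mul, one_mul]
  constructor
  · rintro ⟨i, j, hij, rfl⟩
    exact ⟨_, ⟨i, j, hij, rfl⟩, rfl⟩
  · rintro ⟨_, ⟨i, j, hij, rfl⟩, rfl⟩
    exact ⟨i, j, hij, rfl⟩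

theorem sum_single_one_apply [DecidableEq V] (T : Finset V) (i : V) :
    ∑ k ∈ T, single i 1 k = if i ∈ T then 1 else 0 := by
  simp [single_apply]

theorem finite_boundedVectors [Finite V] (𝒯 : Set (Finset V)) (s : ℕ) :
    (boundedVectors 𝒯 s).Finite :=
  (finite_of_degree_eq (2 * s)).subset fun _ hm => hm.1

theorem nsmul_edgeVectors_subset (h𝒯 : ∀ T ∈ 𝒯, G.IsIndepSet T) (s : ℕ) :
    s • edgeVectors G ⊆ boundedVectors 𝒯 s := by
  classical
  induction s with
  | zero => simp [boundedVectors]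
  | succ s ih =>
    rw [succ_nsmul]
    rintro _ ⟨m, hm, _, ⟨i, j, hij, rfl⟩, rfl⟩
    obtain ⟨hdeg, hsum⟩ := ih hm
    refine ⟨by simp only [map_add, degree_single]; omega, fun T hT => ?_⟩
    have hnot : ¬(i ∈ T ∧ j ∈ T) := fun h => h𝒯 T hT h.1 h.2 hij.ne hij
    have := hsum T hT
    simp only [Finsupp.add_apply, Finset.sum_add_distrib, sum_single_one_apply]
    grind

theorem mem_boundedVectors_add_edgeVectors (hm : m ∈ boundedVectors 𝒯 (s + 1)) (hij : G.Adj i j)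
    (hi : 1 ≤ m i) (hj : 1 ≤ m j) (hslack : ∀ T ∈ 𝒯, i ∉ T → j ∉ T → ∑ k ∈ T, m k ≤ s) :
    m ∈ boundedVectors 𝒯 s + edgeVectors G := by
  classical
  have hle : single i 1 + single j 1 ≤ m := by
    intro k
    simp only [Finsupp.add_apply, single_apply]
    grind [hij.ne]
  obtain ⟨n, rfl⟩ := exists_add_of_le hle
  refine ⟨n, ⟨?_, fun T hT => ?_⟩, _, ⟨i, j, hij, rfl⟩, add_comm _ _⟩
  · have := hm.1
    simp only [map_add, degree_single] at this
    omega
  · have hsum := hm.2 T hT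
    have hslack := hslack T hT
    simp only [Finsupp.add_apply, Finset.sum_add_distrib, sum_single_one_apply] at hsum hslack
    grind

theorem boundedVectors_subset_nsmul_edgeVectors
    (hstep : ∀ s, boundedVectors 𝒯 (s + 1) ⊆ boundedVectors 𝒯 s + edgeVectors G) (s : ℕ) :
    boundedVectors 𝒯 s ⊆ s • edgeVectors G := by
  induction s with
  | zero => exact fun m hm => (degree_eq_zero_iff m).mp (by simpa using hm.1)
  | succ s ih => exact (hstep s).trans (succ_nsmul (edgeVectors G) s ▸ Set.add_subset_add_right ih)

theorem exchange_le (v : V →₀ ℕ) (i j : V) : exchange v i j ≤ v + single i 1 :=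
  add_le_add_left tsub_le_self _

theorem toLex_exchange_lt [LinearOrder V] (hj : 1 ≤ v j) (hij : j < i) :
    toLex (exchange v i j) < toLex v := by
  obtain ⟨n, rfl⟩ := exists_add_of_le (single_le_iff.mpr hj)
  rw [exchange, add_tsub_cancel_left, add_comm (single j 1)]
  exact add_lt_add_right (Lex.single_lt_iff.mpr hij) (toLex n)

end EdgeVectors

section PentagonPlus

variable {s : ℕ} {u v m : Fin 6 →₀ ℕ} {i j : Fin 6}

/-- The maximal independent sets `{p,q,x}, {a,z}, {b,z}, {a,q}, {b,p}` of `pentagonPlus`. -/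
def maxIndepSets : Set (Finset (Fin 6)) :=
  {{2, 3, 4}, {0, 5}, {1, 5}, {0, 3}, {1, 2}}

theorem isIndepSet_of_mem_maxIndepSets {T : Finset (Fin 6)} (hT : T ∈ maxIndepSets) :
    pentagonPlus.IsIndepSet T := by
  rcases hT with rfl | rfl | rfl | rfl | rfl <;>
    simp [SimpleGraph.isIndepSet_iff, Set.pairwise_insert, pentagonPlus]

theorem forall_mem_maxIndepSets {P : Finset (Fin 6) → Prop} :
    (∀ T ∈ maxIndepSets, P T) ↔ P {2, 3, 4} ∧ P {0, 5} ∧ P {1, 5} ∧ P {0, 3} ∧ P {1, 2} := by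
  simp [maxIndepSets]

theorem mem_boundedVectors_iff : m ∈ boundedVectors maxIndepSets s ↔
    m 0 + m 1 + m 2 + m 3 + m 4 + m 5 = 2 * s ∧ m 2 + m 3 + m 4 ≤ s ∧
      m 0 + m 5 ≤ s ∧ m 1 + m 5 ≤ s ∧ m 0 + m 3 ≤ s ∧ m 1 + m 2 ≤ s := by
  simp [boundedVectors, forall_mem_maxIndepSets, degree_eq_sum, Fin.sum_univ_six, add_assoc]

theorem exists_adj_of_mem_boundedVectors (hm : m ∈ boundedVectors maxIndepSets (s + 1)) :
    ∃ i j, pentagonPlus.Adj i j ∧ 1 ≤ m i ∧ 1 ≤ m j ∧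
      ∀ T ∈ maxIndepSets, i ∉ T → j ∉ T → ∑ k ∈ T, m k ≤ s := by
  have hm := mem_boundedVectors_iff.mp hm
  have hcases :
      1 ≤ m 0 ∧ 1 ≤ m 1 ∧ m 2 + m 3 + m 4 ≤ s ∨
      1 ≤ m 0 ∧ 1 ≤ m 2 ∧ m 1 + m 5 ≤ s ∨
      1 ≤ m 1 ∧ 1 ≤ m 3 ∧ m 0 + m 5 ≤ s ∨
      1 ≤ m 2 ∧ 1 ≤ m 5 ∧ m 0 + m 3 ≤ s ∨
      1 ≤ m 3 ∧ 1 ≤ m 5 ∧ m 1 + m 2 ≤ s ∨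
      1 ≤ m 4 ∧ 1 ≤ m 5 ∧ m 0 + m 3 ≤ s ∧ m 1 + m 2 ≤ s ∨
      1 ≤ m 0 ∧ 1 ≤ m 4 ∧ m 1 + m 5 ≤ s ∧ m 1 + m 2 ≤ s ∨
      1 ≤ m 1 ∧ 1 ≤ m 4 ∧ m 0 + m 5 ≤ s ∧ m 0 + m 3 ≤ s := by
    by_contra! h
    grind
  simp only [forall_mem_maxIndepSets]
  rcases hcases with h | h | h | h | h | h | h | h
  · exact ⟨0, 1, by simp [pentagonPlus], by simpa [add_assoc] using h⟩
  · exact ⟨0, 2, by simp [pentagonPlus], by simpa using h⟩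
  · exact ⟨1, 3, by simp [pentagonPlus], by simpa using h⟩
  · exact ⟨2, 5, by simp [pentagonPlus], by simpa using h⟩
  · exact ⟨3, 5, by simp [pentagonPlus], by simpa using h⟩
  · exact ⟨4, 5, by simp [pentagonPlus], by simpa using h⟩
  · exact ⟨0, 4, by simp [pentagonPlus], by simpa using h⟩
  · exact ⟨1, 4, by simp [pentagonPlus], by simpa using h⟩

theorem nsmul_edgeVectors_pentagonPlus (s : ℕ) :
    s • edgeVectors pentagonPlus = boundedVectors maxIndepSets s := by
  refine (nsmul_edgeVectors_subset (fun _ => isIndepSet_of_mem_maxIndepSets) s).antisymm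
    (boundedVectors_subset_nsmul_edgeVectors (fun s m hm => ?_) s)
  obtain ⟨i, j, hij, hi, hj, hslack⟩ := exists_adj_of_mem_boundedVectors hm
  exact mem_boundedVectors_add_edgeVectors hm hij hi hj hslack

/-- The exponent vectors of the monomials `(ap)^k (bq)^l`. -/
def IsApBqVector (m : Fin 6 →₀ ℕ) : Prop :=
  m 0 = m 2 ∧ m 1 = m 3 ∧ m 4 = 0 ∧ m 5 = 0

open Classical in
/-- The sorting key: increasing lexicographic order, except that among the generators with a
given exponent of `a` the one of the form `(ap)^k (bq)^l` is moved to the end. -/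
noncomputable def sliceKey (m : Fin 6 →₀ ℕ) : ℕ ×ₗ ℕ ×ₗ Lex (Fin 6 →₀ ℕ) :=
  toLex (m 0, toLex (if IsApBqVector m then 1 else 0, toLex m))

theorem sliceKey_injective : Function.Injective sliceKey := fun u v h => by
  simp only [sliceKey, toLex_inj, Prod.mk.injEq] at h
  exact h.2.2

theorem sliceKey_lt_iff : sliceKey u < sliceKey v ↔ u 0 < v 0 ∨ u 0 = v 0 ∧
    (¬IsApBqVector u ∧ IsApBqVector v ∨
      (IsApBqVector u ↔ IsApBqVector v) ∧ toLex u < toLex v) := by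
  simp only [sliceKey, Prod.Lex.toLex_lt_toLex]
  split_ifs <;> simp_all

/-- A witness that the variable `X_i` lies in the colon ideal of the monomial with exponent
vector `v` by the earlier generators of the `s`-th power. -/
def IsColonVar (s : ℕ) (v : Fin 6 →₀ ℕ) (i : Fin 6) : Prop :=
  ∃ w ∈ boundedVectors maxIndepSets s, sliceKey w < sliceKey v ∧ w ≤ v + single i 1

theorem exchange_apply (hij : i ≠ j) (k : Fin 6) :
    exchange v i j k = if k = i then v k + 1 else if k = j then v k - 1 else v k := by
  simp only [exchange, Finsupp.add_apply, tsub_apply, single_apply]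
  grind

theorem isColonVar_of_exchange_zero (hmem : exchange v i 0 ∈ boundedVectors maxIndepSets s)
    (h0 : 1 ≤ v 0) (hi : i ≠ 0) : IsColonVar s v i := by
  refine ⟨exchange v i 0, hmem, ?_, exchange_le v i 0⟩
  rw [sliceKey_lt_iff, exchange_apply hi, if_neg hi.symm, if_pos rfl]
  omega

theorem isColonVar_of_exchange_lt (hmem : exchange v i j ∈ boundedVectors maxIndepSets s)
    (hw : ¬IsApBqVector (exchange v i j)) (hj : 1 ≤ v j) (h0 : 0 < j) (hji : j < i) :
    IsColonVar s v i := by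
  refine ⟨exchange v i j, hmem, ?_, exchange_le v i j⟩
  rw [sliceKey_lt_iff, exchange_apply hji.ne', if_neg (h0.trans hji).ne, if_neg h0.ne]
  have := toLex_exchange_lt hj hji
  tauto

theorem isColonVar_one_of_isApBqVector (hv : v ∈ boundedVectors maxIndepSets s)
    (hL : IsApBqVector v) (h2 : 1 ≤ v 2) : IsColonVar s v 1 := by
  refine ⟨exchange v 1 2, ?_, ?_, exchange_le v 1 2⟩
  · grind [mem_boundedVectors_iff, exchange_apply, IsApBqVector]
  · have hw : ¬IsApBqVector (exchange v 1 2) := by grind [exchange_apply, IsApBqVector]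
    rw [sliceKey_lt_iff, exchange_apply (by decide)]
    exact .inr ⟨rfl, .inl ⟨hw, hL⟩⟩

theorem exists_isColonVar_of_lt_of_slack (hs : 2 ≤ s) (hu : u ∈ boundedVectors maxIndepSets s)
    (hv : v ∈ boundedVectors maxIndepSets s) (ha : u 0 < v 0) (hslack : v 2 + v 3 + v 4 < s) :
    ∃ i, v i < u i ∧ IsColonVar s v i := by
  by_contra! hno
  replace hno i (hi : IsColonVar s v i) : u i ≤ v i := not_lt.mp fun h => hno i h hi
  rw [mem_boundedVectors_iff] at hu hv
  have from_a (i) (hi : i ≠ 0) (hmem : exchange v i 0 ∈ boundedVectors maxIndepSets s) :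
      u i ≤ v i := hno i (isColonVar_of_exchange_zero hmem (by omega) hi)
  have hq : u 3 ≤ v 3 := from_a 3 (by decide) (by grind [mem_boundedVectors_iff, exchange_apply])
  have hx : u 4 ≤ v 4 := from_a 4 (by decide) (by grind [mem_boundedVectors_iff, exchange_apply])
  have hb (hbz : v 1 + v 5 < s) (hbp : v 1 + v 2 < s) : u 1 ≤ v 1 :=
    from_a 1 (by decide) (by grind [mem_boundedVectors_iff, exchange_apply])
  have hp (hbp : v 1 + v 2 < s) : u 2 ≤ v 2 :=
    from_a 2 (by decide) (by grind [mem_boundedVectors_iff, exchange_apply])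
  have hz (hbz : v 1 + v 5 < s) : u 5 ≤ v 5 :=
    from_a 5 (by decide) (by grind [mem_boundedVectors_iff, exchange_apply])
  obtain ⟨hbz, hbp⟩ : v 1 + v 5 = s ∧ v 1 + v 2 = s := by omega
  by_cases hw : IsApBqVector (exchange v 2 1)
  · have : u 5 ≤ v 5 := hno 5 (isColonVar_of_exchange_lt (j := 1)
      (by grind [mem_boundedVectors_iff, exchange_apply, IsApBqVector])
      (by grind [exchange_apply, IsApBqVector]) (by omega) (by decide) (by decide))
    omega
  · have : u 2 ≤ v 2 := hno 2 (isColonVar_of_exchange_lt (j := 1)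
      (by grind [mem_boundedVectors_iff, exchange_apply]) hw (by omega) (by decide) (by decide))
    omega

theorem exists_isColonVar_of_lt_of_tight (hu : u ∈ boundedVectors maxIndepSets s)
    (hv : v ∈ boundedVectors maxIndepSets s) (ha : u 0 < v 0) (htight : v 2 + v 3 + v 4 = s) :
    ∃ i, v i < u i ∧ IsColonVar s v i := by
  by_contra! hno
  replace hno i (hi : IsColonVar s v i) : u i ≤ v i := not_lt.mp fun h => hno i h hi
  have hv' := hv
  rw [mem_boundedVectors_iff] at hu hv'
  have hz : u 5 ≤ v 5 := hno 5 (isColonVar_of_exchange_zero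
    (by grind [mem_boundedVectors_iff, exchange_apply]) (by omega) (by decide))
  have hb (hbp : v 1 + v 2 < s) : u 1 ≤ v 1 := hno 1 (isColonVar_of_exchange_zero
    (by grind [mem_boundedVectors_iff, exchange_apply]) (by omega) (by decide))
  have hbp : v 1 + v 2 = s := by omega
  have hx : u 4 ≤ v 4 := hno 4 (isColonVar_of_exchange_lt (j := 2)
    (by grind [mem_boundedVectors_iff, exchange_apply]) (by grind [exchange_apply, IsApBqVector])
    (by omega) (by decide) (by decide))
  by_cases hL : IsApBqVector v
  · have : u 1 ≤ v 1 := hno 1 (isColonVar_one_of_isApBqVector hv hL (by omega))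
    omega
  · have : u 3 ≤ v 3 := hno 3 (isColonVar_of_exchange_lt (j := 2)
      (by grind [mem_boundedVectors_iff, exchange_apply, IsApBqVector])
      (by grind [exchange_apply, IsApBqVector]) (by omega) (by decide) (by decide))
    omega

theorem exists_isColonVar_of_isApBqVector (hu : u ∈ boundedVectors maxIndepSets s)
    (hv : v ∈ boundedVectors maxIndepSets s) (ha : u 0 = v 0) (hne : u ≠ v)
    (hL : IsApBqVector v) : ∃ i, v i < u i ∧ IsColonVar s v i := by
  by_contra! hno
  replace hno i (hi : IsColonVar s v i) : u i ≤ v i := not_lt.mp fun h => hno i h hi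
  have hb (hp : 1 ≤ v 2) : u 1 ≤ v 1 := hno 1 (isColonVar_one_of_isApBqVector hv hL hp)
  rw [mem_boundedVectors_iff] at hu hv
  obtain ⟨hap, hbq, hvx, hvz⟩ := hL
  have hxp (hp : 1 ≤ v 2) : u 4 ≤ v 4 := hno 4 (isColonVar_of_exchange_lt (j := 2)
    (by grind [mem_boundedVectors_iff, exchange_apply]) (by grind [exchange_apply, IsApBqVector])
    hp (by decide) (by decide))
  have hxq (hq : 1 ≤ v 3) : u 4 ≤ v 4 := hno 4 (isColonVar_of_exchange_lt (j := 3)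
    (by grind [mem_boundedVectors_iff, exchange_apply]) (by grind [exchange_apply, IsApBqVector])
    hq (by decide) (by decide))
  have hz (hb : 1 ≤ v 1) : u 5 ≤ v 5 := hno 5 (isColonVar_of_exchange_lt (j := 1)
    (by grind [mem_boundedVectors_iff, exchange_apply]) (by grind [exchange_apply, IsApBqVector])
    hb (by decide) (by decide))
  exact hne (Finsupp.ext fun i => by fin_cases i <;> grind)

theorem exists_isColonVar_of_lt_one (hu : u ∈ boundedVectors maxIndepSets s)
    (hv : v ∈ boundedVectors maxIndepSets s) (huL : ¬IsApBqVector u) (ha : u 0 = v 0)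
    (hb : u 1 < v 1) : ∃ i, v i < u i ∧ IsColonVar s v i := by
  by_contra! hno
  rw [mem_boundedVectors_iff] at hu hv
  have from_b {i} (hi : 1 < i) (hmem : exchange v i 1 ∈ boundedVectors maxIndepSets s)
      (hw : ¬IsApBqVector (exchange v i 1)) : u i ≤ v i :=
    not_lt.mp fun h => hno i h (isColonVar_of_exchange_lt hmem hw (by omega) (by decide) hi)
  have hz (haz : v 0 + v 5 < s) : u 5 ≤ v 5 := from_b (by decide)
    (by grind [mem_boundedVectors_iff, exchange_apply]) (by grind [exchange_apply, IsApBqVector])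
  by_cases htight : v 2 + v 3 + v 4 = s
  · omega
  have hp (hw : ¬IsApBqVector (exchange v 2 1)) : u 2 ≤ v 2 := from_b (by decide)
    (by grind [mem_boundedVectors_iff, exchange_apply]) hw
  have hx : u 4 ≤ v 4 := from_b (by decide)
    (by grind [mem_boundedVectors_iff, exchange_apply]) (by grind [exchange_apply, IsApBqVector])
  have hq (haq : v 0 + v 3 < s) : u 3 ≤ v 3 := from_b (by decide)
    (by grind [mem_boundedVectors_iff, exchange_apply]) (by grind [exchange_apply, IsApBqVector])
  by_cases hw : IsApBqVector (exchange v 2 1)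
  · exact huL (by grind [exchange_apply, IsApBqVector])
  · have := hp hw
    omega

theorem exists_isColonVar_of_lt_two (hu : u ∈ boundedVectors maxIndepSets s)
    (hv : v ∈ boundedVectors maxIndepSets s) (huL : ¬IsApBqVector u) (ha : u 0 = v 0)
    (hb : u 1 = v 1) (hp : u 2 < v 2) : ∃ i, v i < u i ∧ IsColonVar s v i := by
  by_contra! hno
  rw [mem_boundedVectors_iff] at hu hv
  have from_p {i} (hi : 2 < i) (hmem : exchange v i 2 ∈ boundedVectors maxIndepSets s)
      (hw : ¬IsApBqVector (exchange v i 2)) : u i ≤ v i :=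
    not_lt.mp fun h => hno i h (isColonVar_of_exchange_lt hmem hw (by omega) (by decide) hi)
  have hx : u 4 ≤ v 4 := from_p (by decide)
    (by grind [mem_boundedVectors_iff, exchange_apply]) (by grind [exchange_apply, IsApBqVector])
  have hz (haz : v 0 + v 5 < s) (hbz : v 1 + v 5 < s) : u 5 ≤ v 5 := from_p (by decide)
    (by grind [mem_boundedVectors_iff, exchange_apply]) (by grind [exchange_apply, IsApBqVector])
  by_cases hw : IsApBqVector (exchange v 3 2)
  · exact huL (by grind [exchange_apply, IsApBqVector])
  · have hq (haq : v 0 + v 3 < s) : u 3 ≤ v 3 := from_p (by decide)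
      (by grind [mem_boundedVectors_iff, exchange_apply]) hw
    omega

theorem exists_isColonVar_of_lt_three (hu : u ∈ boundedVectors maxIndepSets s)
    (hv : v ∈ boundedVectors maxIndepSets s) (ha : u 0 = v 0) (hb : u 1 = v 1) (hp : u 2 = v 2)
    (hq : u 3 < v 3) : ∃ i, v i < u i ∧ IsColonVar s v i := by
  rw [mem_boundedVectors_iff] at hu hv
  by_cases hx : v 4 < u 4
  · exact ⟨4, hx, isColonVar_of_exchange_lt (j := 3)
      (by grind [mem_boundedVectors_iff, exchange_apply]) (by grind [exchange_apply, IsApBqVector])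
      (by omega) (by decide) (by decide)⟩
  · exact ⟨5, by omega, isColonVar_of_exchange_lt (j := 3)
      (by grind [mem_boundedVectors_iff, exchange_apply]) (by grind [exchange_apply, IsApBqVector])
      (by omega) (by decide) (by decide)⟩

theorem exists_isColonVar_of_lt_four (hu : u ∈ boundedVectors maxIndepSets s)
    (hv : v ∈ boundedVectors maxIndepSets s) (ha : u 0 = v 0) (hb : u 1 = v 1) (hp : u 2 = v 2)
    (hq : u 3 = v 3) (hx : u 4 < v 4) : ∃ i, v i < u i ∧ IsColonVar s v i := by
  rw [mem_boundedVectors_iff] at hu hv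
  exact ⟨5, by omega, isColonVar_of_exchange_lt (j := 4)
    (by grind [mem_boundedVectors_iff, exchange_apply]) (by grind [exchange_apply, IsApBqVector])
    (by omega) (by decide) (by decide)⟩

theorem exists_isColonVar_of_lex_lt (hu : u ∈ boundedVectors maxIndepSets s)
    (hv : v ∈ boundedVectors maxIndepSets s) (huL : ¬IsApBqVector u) (ha : u 0 = v 0)
    (hlex : toLex u < toLex v) : ∃ i, v i < u i ∧ IsColonVar s v i := by
  obtain ⟨j, heq : ∀ k < j, u k = v k, hlt : u j < v j⟩ := Lex.lt_iff.mp hlex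
  fin_cases j
  · exact absurd ha hlt.ne
  · exact exists_isColonVar_of_lt_one hu hv huL ha hlt
  · exact exists_isColonVar_of_lt_two hu hv huL ha (heq 1 (by decide)) hlt
  · exact exists_isColonVar_of_lt_three hu hv ha (heq 1 (by decide)) (heq 2 (by decide)) hlt
  · exact exists_isColonVar_of_lt_four hu hv ha (heq 1 (by decide)) (heq 2 (by decide))
      (heq 3 (by decide)) hlt
  · have hdeg : u.degree = v.degree := hu.1.trans hv.1.symm
    have hb := heq 1 (by decide)
    have hp := heq 2 (by decide)
    have hq := heq 3 (by decide)
    have hx := heq 4 (by decide)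
    have hz : u 5 < v 5 := hlt
    simp only [degree_eq_sum, Fin.sum_univ_six] at hdeg
    omega

theorem exists_isColonVar (hs : 2 ≤ s) (hu : u ∈ boundedVectors maxIndepSets s)
    (hv : v ∈ boundedVectors maxIndepSets s) (hlt : sliceKey u < sliceKey v) :
    ∃ i, v i < u i ∧ IsColonVar s v i := by
  rcases sliceKey_lt_iff.mp hlt with ha | ⟨ha, hslice⟩
  · rcases (mem_boundedVectors_iff.mp hv).2.1.lt_or_eq with hslack | htight
    · exact exists_isColonVar_of_lt_of_slack hs hu hv ha hslack
    · exact exists_isColonVar_of_lt_of_tight hu hv ha htight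
  · by_cases hvL : IsApBqVector v
    · exact exists_isColonVar_of_isApBqVector hu hv ha (ne_of_apply_ne sliceKey hlt.ne) hvL
    · exact exists_isColonVar_of_lex_lt hu hv (by tauto) ha (by tauto)

end PentagonPlus

/-- for every `s ≥ 2`, `I(G)^s` has linear quotients, where `G` is the
pentagon `a-p-z-q-b-a` together with a vertex `x` adjacent to `a, b, z`. -/
theorem stmt13 {K : Type*} [Field K] (s : ℕ) (hs : 2 ≤ s) :
    HasLinearQuotients ((edgeIdeal K pentagonPlus) ^ s) := by
  rw [edgeIdeal_pow, nsmul_edgeVectors_pentagonPlus]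
  exact hasLinearQuotients_of_exchange (finite_boundedVectors _ s)
    (isAntichain_of_degree_eq fun _ hm => hm.1) sliceKey_injective.injOn
    fun u hu v hv hlt => exists_isColonVar hs hu hv hlt
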